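/- Let V₁ ⊆ ℝⁿ and V₂ ⊆ ℝᵐ be subsets and let χ : ℝⁿ → ℝᵐ be a map with χ(V₁) ⊆ V₂ such that for every function g : ℝᵐ → ℝ that is locally smoothly extendable on V₂, the composition g ∘ χ is locally smoothly extendable on V₁. Then χ is locally smoothly extendable on V₁: for every x ∈ V₁ there exist an open set W ⊆ ℝⁿ with x ∈ W and a C^∞ map X : ℝⁿ → ℝᵐ agreeing with χ on W ∩ V₁. -/

import Mathlib

/-- A function `f : ℝⁿ → ℝ` is locally smoothly extendable on `V ⊆ ℝⁿ` if
for every `x ∈ V` there are an open set `W ∋ x` and a `C^∞` function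
`F : ℝⁿ → ℝ` with `f = F` on `W ∩ V`. -/
def LocSmoothExtFun {n : ℕ} (V : Set (Fin n → ℝ)) (f : (Fin n → ℝ) → ℝ) : Prop :=
  ∀ x ∈ V, ∃ W : Set (Fin n → ℝ), IsOpen W ∧ x ∈ W ∧
    ∃ F : (Fin n → ℝ) → ℝ, ContDiff ℝ (⊤ : ℕ∞) F ∧ ∀ y ∈ W ∩ V, f y = F y

/-- A map `ψ : ℝⁿ → ℝᵐ` is locally smoothly extendable on `V ⊆ ℝⁿ` if
for every `x ∈ V` there are an open set `W ∋ x` and a `C^∞` map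
`Ψ : ℝⁿ → ℝᵐ` with `ψ = Ψ` on `W ∩ V`. -/
def LocSmoothExtMap {n m : ℕ} (V : Set (Fin n → ℝ))
    (ψ : (Fin n → ℝ) → (Fin m → ℝ)) : Prop :=
  ∀ x ∈ V, ∃ W : Set (Fin n → ℝ), IsOpen W ∧ x ∈ W ∧
    ∃ Ψ : (Fin n → ℝ) → (Fin m → ℝ), ContDiff ℝ (⊤ : ℕ∞) Ψ ∧ ∀ y ∈ W ∩ V, ψ y = Ψ y

/-! A basis identifies the target with a coordinate space whose coordinates are globally smooth
functions, so each coordinate of the map is a pullback of a smooth function and extends locally.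
There are finitely many coordinates, so near a given point their extensions are valid on a common
neighbourhood, where they are the coordinates of an extension of the map. -/

section ContDiffExtendableOn

open Filter Topology

variable {𝕜 : Type*} [NontriviallyNormedField 𝕜]
  {E : Type*} [NormedAddCommGroup E] [NormedSpace 𝕜 E]
  {F : Type*} [NormedAddCommGroup F] [NormedSpace 𝕜 F]
  {G : Type*} [NormedAddCommGroup G] [NormedSpace 𝕜 G]
  {k : WithTop ℕ∞} {V : Set E} {f : E → F}

variable (𝕜 k V f) in
/-- Local extendability of `f` from `V` to `C^k` maps: at each point of `V`, the germ of `f` along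
`V` is the germ of a globally defined `C^k` map. This is smoothness on subsets in the sense of
Aronszajn, for maps between normed spaces and any order `k` of differentiability. -/
def ContDiffExtendableOn : Prop :=
  ∀ x ∈ V, ∃ f' : E → F, ContDiff 𝕜 k f' ∧ f =ᶠ[𝓝[V] x] f'

namespace ContDiffExtendableOn

theorem iff_exists_isOpen :
    ContDiffExtendableOn 𝕜 k V f ↔
      ∀ x ∈ V, ∃ W : Set E, IsOpen W ∧ x ∈ W ∧
        ∃ f' : E → F, ContDiff 𝕜 k f' ∧ ∀ y ∈ W ∩ V, f y = f' y := by
  refine forall₂_congr fun x _ => ⟨?_, ?_⟩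
  · rintro ⟨f', hf', heq⟩
    obtain ⟨W, hW, hxW, hWV⟩ := mem_nhdsWithin.1 heq
    exact ⟨W, hW, hxW, f', hf', hWV⟩
  · rintro ⟨W, hW, hxW, f', hf', heq⟩
    exact ⟨f', hf', mem_nhdsWithin.2 ⟨W, hW, hxW, heq⟩⟩

theorem of_contDiff (hf : ContDiff 𝕜 k f) : ContDiffExtendableOn 𝕜 k V f :=
  fun _ _ => ⟨f, hf, EventuallyEq.rfl⟩

theorem contDiff_comp {g : F → G} (hg : ContDiff 𝕜 k g) (hf : ContDiffExtendableOn 𝕜 k V f) :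
    ContDiffExtendableOn 𝕜 k V (g ∘ f) := fun x hx =>
  let ⟨f', hf', heq⟩ := hf x hx
  ⟨g ∘ f', hg.comp hf', heq.fun_comp g⟩

theorem pi {ι : Type*} [Fintype ι] {H : ι → Type*} [∀ i, NormedAddCommGroup (H i)]
    [∀ i, NormedSpace 𝕜 (H i)] {φ : E → ∀ i, H i}
    (hφ : ∀ i, ContDiffExtendableOn 𝕜 k V fun x => φ x i) : ContDiffExtendableOn 𝕜 k V φ := by
  intro x hx
  choose φ' hφ' heq using fun i => hφ i x hx
  exact ⟨fun y i => φ' i y, contDiff_pi.2 hφ', (eventually_all.2 heq).mono fun _ => funext⟩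

end ContDiffExtendableOn

theorem stmt_6_general [CompleteSpace 𝕜] [FiniteDimensional 𝕜 F]
    (hyp : ∀ ℓ : F →L[𝕜] 𝕜, ContDiffExtendableOn 𝕜 k V (ℓ ∘ f)) :
    ContDiffExtendableOn 𝕜 k V f := by
  let e := (Module.finBasis 𝕜 F).equivFunL
  have he : ContDiffExtendableOn 𝕜 k V (e ∘ f) :=
    .pi fun i => hyp ((ContinuousLinearMap.proj i).comp e.toContinuousLinearMap)
  simpa only [← Function.comp_assoc, e.symm_comp_self, Function.id_comp] using
    he.contDiff_comp e.symm.contDiff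

end ContDiffExtendableOn

/-- A map that pulls back locally smoothly extendable functions to locally
smoothly extendable functions is itself locally smoothly extendable
(Proposition 3 for differential subspaces of Euclidean spaces). -/
theorem stmt_6 {n m : ℕ} (V₁ : Set (Fin n → ℝ)) (V₂ : Set (Fin m → ℝ))
    (χ : (Fin n → ℝ) → (Fin m → ℝ)) (hmaps : Set.MapsTo χ V₁ V₂)
    (hyp : ∀ g : (Fin m → ℝ) → ℝ, LocSmoothExtFun V₂ g →
      LocSmoothExtFun V₁ (g ∘ χ)) :
    LocSmoothExtMap V₁ χ := by
  refine ContDiffExtendableOn.iff_exists_isOpen.1 (stmt_6_general fun ℓ => ?_)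
  have hℓ : LocSmoothExtFun V₂ ℓ :=
    ContDiffExtendableOn.iff_exists_isOpen.1 (.of_contDiff ℓ.contDiff)
  exact ContDiffExtendableOn.iff_exists_isOpen.2 (hyp ℓ hℓ)
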